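/- For every p ≥ 1 and K̄ ≥ 1 with p ≥ K̄ there is a constant C > 0 (depending only on p and K̄) with the following property. Let K ≤ K̄, let K̄ divide n, let δ, ξ ∈ [0,1), β > 0 and σ ≥ 0. Let W ∈ ℝ^{n×n} be a symmetric matrix partitioned into K̄ × K̄ blocks according to K̄ groups of indices each of size n/K̄, such that every entry of W inside a diagonal block lies in [1/(1+δ), 1+δ], within each diagonal block all same-column entry ratios are at most 1+δ, and every entry outside the diagonal blocks is nonnegative and at most ξ times every entry inside the diagonal blocks. Let Ã be the normalized matrix of W and let F ∈ ℝ^{n×p} be a minimizer of ‖Ã − FFᵀ‖_F² over ℝ^{n×p}. Let Y ∈ ℝ^{n×K} be a label matrix such that each of the K̄ index groups is assigned a class in {1,…,K} and every row of Y in that group equals the corresponding standard basis vector of ℝ^K. Let ΔY ∈ ℝ^{n×K} be a random matrix with independent entries each distributed as N(0, σ²/K), and let Ŵ* = (FᵀF + βI_p)^{−1} Fᵀ (Y + ΔY). Then E[(1/n)‖Y − FŴ*‖_F²] ≤ (β/(β+1))² + C(δ + ξ) + σ² (K̄/n)(1/(β+1))² + C σ² (√δ + ξ)/β. -/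

import Mathlib

open Matrix Finset MeasureTheory ProbabilityTheory

/-- The symmetrically normalized matrix `D^{-1/2} W D^{-1/2}` where
`D = diag(row sums of W)`. -/
noncomputable def normalizedMatrix {n : ℕ} (W : Matrix (Fin n) (Fin n) ℝ) :
    Matrix (Fin n) (Fin n) ℝ :=
  fun i j => W i j / (Real.sqrt (∑ k, W i k) * Real.sqrt (∑ k, W j k))

/-- Squared Frobenius norm of a real matrix. -/
def frobSq {m k : ℕ} (A : Matrix (Fin m) (Fin k) ℝ) : ℝ :=
  ∑ i, ∑ j, (A i j) ^ 2

/-!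
Let `H = F (FᵀF + β)⁻¹ Fᵀ`. The error is `(1 - H) Y - H ΔY`, with expected square
`‖(1 - H) Y‖² + σ² ‖H‖²`. The normalized matrix is within `O(δ + ξ)` of the rank-`K̄` projection
`Q` that averages over the sub-classes. As `K̄ ≤ p`, `Q` is a competitor for `F Fᵀ`, so
`E = F Fᵀ - Q` is also `O(δ + ξ)`. No eigenvalue perturbation is needed to pass from `E` to `H`:
the identity `(1 - H) (F Fᵀ + β) = β` shows that `1 - H` is a contraction, and, since `Q² = Q`
and `Q Y = Y`, it turns into
`(β + 1) (1 - H) Y = β Y - (1 - H) E Y` and `β (H - Q / (β + 1)) = (1 - H) (E - E Q / (β + 1))`.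
-/

section Frobenius

open scoped Matrix.Norms.Frobenius

variable {ι κ μ : Type*} [Fintype ι] [Fintype κ] [Fintype μ]

lemma frobenius_norm_sq (A : Matrix ι κ ℝ) : ‖A‖ ^ 2 = ∑ i, ∑ j, A i j ^ 2 := by
  rw [frobenius_norm_def, ← Real.sqrt_eq_rpow, Real.sq_sqrt (by positivity)]
  simp

lemma frobSq_eq_norm_sq {m k : ℕ} (A : Matrix (Fin m) (Fin k) ℝ) : frobSq A = ‖A‖ ^ 2 :=
  (frobenius_norm_sq A).symm

lemma frobenius_norm_le_card_mul {A : Matrix ι ι ℝ} {c : ℝ} (hc : 0 ≤ c)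
    (hA : ∀ i j, |A i j| ≤ c) : ‖A‖ ≤ Fintype.card ι * c := by
  refine le_of_sq_le_sq ?_ (by positivity)
  calc ‖A‖ ^ 2 ≤ ∑ _i : ι, ∑ _j : ι, c ^ 2 := by
        rw [frobenius_norm_sq]
        exact sum_le_sum fun i _ => sum_le_sum fun j _ =>
          sq_le_sq.2 ((hA i j).trans (le_abs_self c))
    _ = (Fintype.card ι * c) ^ 2 := by
        simp only [sum_const, card_univ, nsmul_eq_mul]
        ring

lemma frobenius_norm_sq_eq_trace (A : Matrix ι κ ℝ) : ‖A‖ ^ 2 = trace (Aᵀ * A) := by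
  rw [frobenius_norm_sq, Finset.sum_comm]
  simp [trace, mul_apply, sq]

lemma frobenius_norm_one_sq [DecidableEq ι] :
    ‖(1 : Matrix ι ι ℝ)‖ ^ 2 = Fintype.card ι := by
  simp [frobenius_norm_sq_eq_trace]

lemma frobenius_norm_sq_gram_add_smul_mul [DecidableEq κ] (A : Matrix ι κ ℝ) (c : ℝ)
    (X : Matrix κ μ ℝ) :
    ‖(Aᵀ * A + c • 1) * X‖ ^ 2 =
      ‖Aᵀ * A * X‖ ^ 2 + 2 * c * ‖A * X‖ ^ 2 + c ^ 2 * ‖X‖ ^ 2 := by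
  simp only [frobenius_norm_sq_eq_trace, Matrix.add_mul, Matrix.mul_add, transpose_add,
    transpose_mul, transpose_transpose, smul_mul, Matrix.mul_smul, Matrix.one_mul, transpose_smul,
    trace_add, trace_smul, smul_eq_mul, Matrix.mul_assoc]
  ring

lemma norm_mul_transpose_sub_le_two_mul {A : Matrix ι ι ℝ} {F : Matrix ι κ ℝ}
    (hF : ∀ F' : Matrix ι κ ℝ, ‖A - F * Fᵀ‖ ≤ ‖A - F' * F'ᵀ‖) (F' : Matrix ι κ ℝ) :
    ‖F * Fᵀ - F' * F'ᵀ‖ ≤ 2 * ‖A - F' * F'ᵀ‖ := by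
  calc ‖F * Fᵀ - F' * F'ᵀ‖ ≤ ‖F * Fᵀ - A‖ + ‖A - F' * F'ᵀ‖ :=
        norm_sub_le_norm_sub_add_norm_sub _ _ _
    _ ≤ 2 * ‖A - F' * F'ᵀ‖ := by
        rw [norm_sub_rev, two_mul]
        gcongr
        exact hF F'

end Frobenius

section RidgeSmoother

open scoped Matrix.Norms.Frobenius

variable {ι κ μ : Type*} [Fintype ι] [Fintype κ] [DecidableEq κ]

/-- The hat matrix of ridge regression: it sends labels to the fitted values `F Ŵ*`. -/
noncomputable def ridgeSmoother (F : Matrix ι κ ℝ) (β : ℝ) : Matrix ι ι ℝ :=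
  F * ((Fᵀ * F + β • 1)⁻¹ * Fᵀ)

variable (F : Matrix ι κ ℝ) {β : ℝ}

lemma isUnit_det_gram_add_smul_one (hβ : 0 < β) : IsUnit (Fᵀ * F + β • 1).det := by
  have hgram : (Fᵀ * F).PosSemidef := by
    simpa only [conjTranspose_eq_transpose_of_trivial] using posSemidef_conjTranspose_mul_self F
  exact (isUnit_iff_isUnit_det _).1 (PosDef.posSemidef_add hgram (PosDef.one.smul hβ)).isUnit

lemma commute_gram_inv_gram_add_smul_one (hβ : 0 < β) :
    Commute (Fᵀ * F) (Fᵀ * F + β • 1)⁻¹ := by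
  set S := (Fᵀ * F + β • 1)⁻¹
  have hdet := isUnit_det_gram_add_smul_one F hβ
  have hleft : Fᵀ * F * S = 1 - β • S := by
    rw [eq_sub_iff_add_eq, ← mul_nonsing_inv _ hdet, Matrix.add_mul, smul_mul, Matrix.one_mul]
  have hright : S * (Fᵀ * F) = 1 - β • S := by
    rw [eq_sub_iff_add_eq, ← nonsing_inv_mul _ hdet, Matrix.mul_add, Matrix.mul_smul,
      Matrix.mul_one]
  exact hleft.trans hright.symm

lemma norm_ridgeSmoother_sq_le_card (hβ : 0 < β) :
    ‖ridgeSmoother F β‖ ^ 2 ≤ Fintype.card κ := by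
  set G := Fᵀ * F with hG
  set S := (G + β • 1)⁻¹ with hS
  have hdet := isUnit_det_gram_add_smul_one F hβ
  have hGT : Gᵀ = G := by rw [hG, transpose_mul, transpose_transpose]
  have hST : Sᵀ = S := by
    rw [hS, transpose_nonsing_inv, transpose_add, hGT, transpose_smul, transpose_one]
  have hcomm : G * S = S * G := commute_gram_inv_gram_add_smul_one F hβ
  have hnorm : ‖ridgeSmoother F β‖ ^ 2 = ‖G * S‖ ^ 2 := calc
    ‖ridgeSmoother F β‖ ^ 2 = trace (F * (S * G * S * Fᵀ)) := by
      simp only [frobenius_norm_sq_eq_trace, ridgeSmoother, transpose_mul, transpose_transpose,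
        ← hG, ← hS, hST, Matrix.mul_assoc]
      simp only [hG, Matrix.mul_assoc]
    _ = trace ((S * G) * (S * G)) := by
      rw [trace_mul_comm, Matrix.mul_assoc, ← hG]
      simp only [Matrix.mul_assoc]
    _ = ‖G * S‖ ^ 2 := by
      rw [frobenius_norm_sq_eq_trace, transpose_mul, hST, hGT, hcomm]
  have henergy := frobenius_norm_sq_gram_add_smul_mul F β S
  rw [mul_nonsing_inv _ hdet, frobenius_norm_one_sq] at henergy
  rw [hnorm, henergy, add_assoc]
  exact le_add_of_nonneg_right (by positivity)

variable [DecidableEq ι] [Fintype μ] {Q : Matrix ι ι ℝ} {e : ℝ}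

lemma one_sub_ridgeSmoother_mul (hβ : 0 < β) :
    (1 - ridgeSmoother F β) * (F * Fᵀ + β • 1) = β • 1 := by
  have push_through : Fᵀ * (F * Fᵀ + β • 1) = (Fᵀ * F + β • 1) * Fᵀ := by
    simp only [Matrix.mul_add, Matrix.add_mul, Matrix.mul_assoc, Matrix.mul_smul, smul_mul,
      Matrix.mul_one, Matrix.one_mul]
  have hfit : ridgeSmoother F β * (F * Fᵀ + β • 1) = F * Fᵀ := by
    rw [ridgeSmoother, Matrix.mul_assoc, Matrix.mul_assoc, push_through,
      nonsing_inv_mul_cancel_left _ _ (isUnit_det_gram_add_smul_one F hβ)]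
  rw [Matrix.sub_mul, hfit, Matrix.one_mul, add_sub_cancel_left]

lemma mul_one_sub_ridgeSmoother (hβ : 0 < β) :
    (F * Fᵀ + β • 1) * (1 - ridgeSmoother F β) = β • 1 := by
  have hinv : (β⁻¹ • (1 - ridgeSmoother F β)) * (F * Fᵀ + β • 1) = 1 := by
    rw [smul_mul, one_sub_ridgeSmoother_mul F hβ, inv_smul_smul₀ hβ.ne']
  rw [← smul_inv_smul₀ hβ.ne' (1 - ridgeSmoother F β), Matrix.mul_smul, mul_eq_one_comm.1 hinv]

lemma norm_one_sub_ridgeSmoother_mul_le (hβ : 0 < β) (X : Matrix ι μ ℝ) :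
    ‖(1 - ridgeSmoother F β) * X‖ ≤ ‖X‖ := by
  have henergy := frobenius_norm_sq_gram_add_smul_mul Fᵀ β ((1 - ridgeSmoother F β) * X)
  rw [transpose_transpose, ← Matrix.mul_assoc _ _ X, mul_one_sub_ridgeSmoother F hβ, smul_mul,
    Matrix.one_mul, norm_smul, mul_pow, Real.norm_eq_abs, sq_abs] at henergy
  have hsq : β ^ 2 * ‖(1 - ridgeSmoother F β) * X‖ ^ 2 ≤ β ^ 2 * ‖X‖ ^ 2 := by
    rw [henergy]
    exact le_add_of_nonneg_left (by positivity)
  exact le_of_sq_le_sq (le_of_mul_le_mul_left hsq (by positivity)) (norm_nonneg _)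

lemma norm_sub_ridgeSmoother_mul_le (hβ : 0 < β) (hFQ : ‖F * Fᵀ - Q‖ ≤ e) {Y : Matrix ι μ ℝ}
    (hY : Q * Y = Y) : ‖Y - ridgeSmoother F β * Y‖ ≤ (β + e) / (β + 1) * ‖Y‖ := by
  set R := 1 - ridgeSmoother F β with hR
  have hsplit : (β + 1) • (R * Y) = β • Y - R * ((F * Fᵀ - Q) * Y) := by
    have hres : R * (F * Fᵀ * Y) + β • (R * Y) = β • Y := by
      simpa only [Matrix.mul_assoc, Matrix.add_mul, Matrix.smul_mul, Matrix.one_mul,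
        Matrix.mul_add, Matrix.mul_smul] using congrArg (· * Y) (one_sub_ridgeSmoother_mul F hβ)
    rw [← hres, Matrix.sub_mul (F * Fᵀ), hY, Matrix.mul_sub R, add_smul, one_smul]
    abel
  have hbound : (β + 1) * ‖R * Y‖ ≤ (β + e) * ‖Y‖ := calc
    (β + 1) * ‖R * Y‖ = ‖β • Y - R * ((F * Fᵀ - Q) * Y)‖ := by
      rw [← hsplit, norm_smul, Real.norm_of_nonneg (by positivity)]
    _ ≤ ‖β • Y‖ + ‖R * ((F * Fᵀ - Q) * Y)‖ := norm_sub_le _ _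
    _ ≤ β * ‖Y‖ + ‖F * Fᵀ - Q‖ * ‖Y‖ := by
      rw [norm_smul, Real.norm_of_nonneg hβ.le]
      grw [norm_one_sub_ridgeSmoother_mul_le F hβ, frobenius_norm_mul]
    _ ≤ (β + e) * ‖Y‖ := by grw [hFQ, add_mul]
  have hresidual : Y - ridgeSmoother F β * Y = R * Y := by rw [hR, Matrix.sub_mul, Matrix.one_mul]
  rwa [hresidual, div_mul_eq_mul_div, le_div_iff₀' (by positivity)]

lemma norm_sub_ridgeSmoother_mul_sq_le (hβ : 0 < β) (hFQ : ‖F * Fᵀ - Q‖ ≤ e)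
    {Y : Matrix ι μ ℝ} (hY : Q * Y = Y) :
    ‖Y - ridgeSmoother F β * Y‖ ^ 2 ≤ ((β / (β + 1)) ^ 2 + (2 + e) * e) * ‖Y‖ ^ 2 := by
  have he : 0 ≤ e := (norm_nonneg _).trans hFQ
  have hfactor : ((β + e) / (β + 1)) ^ 2 ≤ (β / (β + 1)) ^ 2 + (2 + e) * e := by
    have hβ' : β / (β + 1) ≤ 1 := (div_le_one (by positivity)).2 (by linarith)
    have he' : e / (β + 1) ≤ e := div_le_self he (by linarith)
    calc ((β + e) / (β + 1)) ^ 2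
        = (β / (β + 1)) ^ 2 + (2 * (β / (β + 1)) + e / (β + 1)) * (e / (β + 1)) := by ring
      _ ≤ (β / (β + 1)) ^ 2 + (2 * 1 + e) * e := by gcongr
      _ = (β / (β + 1)) ^ 2 + (2 + e) * e := by ring
  grw [norm_sub_ridgeSmoother_mul_le F hβ hFQ hY, mul_pow, hfactor]

lemma norm_ridgeSmoother_sub_smul_le (hβ : 0 < β) (hQ : Q * Q = Q) (hFQ : ‖F * Fᵀ - Q‖ ≤ e) :
    ‖ridgeSmoother F β - (1 / (β + 1)) • Q‖ ≤ (1 + ‖Q‖) * e / β := by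
  set H := ridgeSmoother F β with hH
  set t := 1 / (β + 1)
  set E := F * Fᵀ - Q with hE
  have ht1 : t ≤ 1 := (div_le_one (by positivity)).2 (by linarith)
  have hE_resolvent : (1 - H) * E = β • H - (1 - H) * Q := by
    have hres := one_sub_ridgeSmoother_mul F hβ
    rw [← hH, Matrix.mul_add, Matrix.mul_smul, Matrix.mul_one, smul_sub] at hres
    rw [hE, Matrix.mul_sub, eq_sub_of_add_eq hres]
    abel
  have hEQ_resolvent : (1 - H) * (E * Q) = (β + 1) • (H * Q) - Q := by
    rw [← Matrix.mul_assoc, hE_resolvent, Matrix.sub_mul, Matrix.mul_assoc, hQ, Matrix.sub_mul,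
      smul_mul, Matrix.one_mul, add_smul, one_smul]
    abel
  have hdiff : β • (H - t • Q) = (1 - H) * (E - t • (E * Q)) := by
    have htβ : t * (β + 1) = 1 := one_div_mul_cancel (by positivity)
    have htβ' : β * t = 1 - t := by linarith
    rw [Matrix.mul_sub, Matrix.mul_smul, hEQ_resolvent, hE_resolvent, smul_sub, smul_sub,
      smul_smul, smul_smul, htβ, htβ', one_smul, sub_smul, one_smul, Matrix.sub_mul,
      Matrix.one_mul]
    abel
  have hbound : β * ‖H - t • Q‖ ≤ (1 + ‖Q‖) * e := calc
    β * ‖H - t • Q‖ = ‖(1 - H) * (E - t • (E * Q))‖ := by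
      rw [← hdiff, norm_smul, Real.norm_of_nonneg hβ.le]
    _ ≤ ‖E‖ + ‖t • (E * Q)‖ :=
      (norm_one_sub_ridgeSmoother_mul_le F hβ _).trans (norm_sub_le _ _)
    _ ≤ ‖E‖ + 1 * (‖E‖ * ‖Q‖) := by
      rw [norm_smul, Real.norm_of_nonneg (by positivity)]
      grw [ht1, frobenius_norm_mul]
    _ = (1 + ‖Q‖) * ‖E‖ := by ring
    _ ≤ (1 + ‖Q‖) * e := by grw [hFQ]
  exact (le_div_iff₀' hβ).2 hbound

lemma norm_ridgeSmoother_sq_le (hβ : 0 < β) (hQ : Q * Q = Q) (hFQ : ‖F * Fᵀ - Q‖ ≤ e) :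
    ‖ridgeSmoother F β‖ ^ 2 ≤ (1 / (β + 1)) ^ 2 * ‖Q‖ ^ 2 +
      (√(Fintype.card κ) + ‖Q‖) * ((1 + ‖Q‖) * e / β) := by
  set H := ridgeSmoother F β
  set a := 1 / (β + 1) * ‖Q‖ with ha
  have hclose : ‖H‖ - a ≤ (1 + ‖Q‖) * e / β := calc
    ‖H‖ - a = ‖H‖ - ‖(1 / (β + 1)) • Q‖ := by
      rw [norm_smul, Real.norm_of_nonneg (by positivity)]
    _ ≤ ‖H - (1 / (β + 1)) • Q‖ := norm_sub_norm_le _ _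
    _ ≤ (1 + ‖Q‖) * e / β := norm_ridgeSmoother_sub_smul_le F hβ hQ hFQ
  have hH : ‖H‖ ≤ √(Fintype.card κ) := Real.le_sqrt_of_sq_le (norm_ridgeSmoother_sq_le_card F hβ)
  have haQ : a ≤ ‖Q‖ :=
    mul_le_of_le_one_left (norm_nonneg _) ((div_le_one (by positivity)).2 (by linarith))
  have he : 0 ≤ e := (norm_nonneg _).trans hFQ
  calc ‖H‖ ^ 2 = (‖H‖ + a) * (‖H‖ - a) + a ^ 2 := by ring
    _ ≤ (‖H‖ + a) * ((1 + ‖Q‖) * e / β) + a ^ 2 := by gcongr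
    _ ≤ (√(Fintype.card κ) + ‖Q‖) * ((1 + ‖Q‖) * e / β) + a ^ 2 := by gcongr
    _ = _ := by rw [ha, mul_pow, add_comm]

end RidgeSmoother

section WhiteNoise

open scoped Matrix.Norms.Frobenius

variable {Ω ι κ μ : Type*} [MeasurableSpace Ω] {P : Measure Ω}

/-- A random matrix whose entries are square integrable and centred with variance `v`, and
uncorrelated within each column: all that the second moment of a linear image depends on. -/
structure IsWhiteNoise [DecidableEq ι] (Z : Ω → Matrix ι κ ℝ) (v : ℝ) (P : Measure Ω) : Prop where
  memLp_two : ∀ i j, MemLp (fun ω => Z ω i j) 2 P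
  mean_eq_zero : ∀ i j, ∫ ω, Z ω i j ∂P = 0
  covariance_eq : ∀ i k j,
    cov[fun ω => Z ω i j, fun ω => Z ω k j; P] = if i = k then v else 0

lemma isWhiteNoise_of_gaussianReal [DecidableEq ι] {Z : Ω → Matrix ι κ ℝ} {v : NNReal}
    (hlaw : ∀ i j, HasLaw (fun ω => Z ω i j) (gaussianReal 0 v) P)
    (hindep : iIndepFun (fun (ij : ι × κ) ω => Z ω ij.1 ij.2) P) :
    IsWhiteNoise Z v P where
  memLp_two i j := (hlaw i j).hasGaussianLaw.memLp_two
  mean_eq_zero i j := by rw [(hlaw i j).integral_eq, integral_id_gaussianReal]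
  covariance_eq i k j := by
    have hmem i j : MemLp (fun ω => Z ω i j) 2 P := (hlaw i j).hasGaussianLaw.memLp_two
    split_ifs with hik
    · rw [hik, covariance_self (hlaw k j).aemeasurable, (hlaw k j).variance_eq,
        variance_id_gaussianReal]
    · exact (hindep.indepFun (i := (i, j)) (j := (k, j)) (by simp [hik])).covariance_eq_zero
        (hmem i j) (hmem k j)

namespace IsWhiteNoise

variable [Fintype ι] [DecidableEq ι] {Z : Ω → Matrix ι κ ℝ} {v : ℝ}

lemma memLp_mul_apply (hZ : IsWhiteNoise Z v P) (H : Matrix μ ι ℝ) (i : μ) (j : κ) :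
    MemLp (fun ω => (H * Z ω) i j) 2 P := by
  simp only [mul_apply]
  exact memLp_finsetSum _ fun k _ => (hZ.memLp_two k j).const_mul _

variable [IsProbabilityMeasure P]

lemma integral_mul_apply (hZ : IsWhiteNoise Z v P) (H : Matrix μ ι ℝ) (i : μ) (j : κ) :
    ∫ ω, (H * Z ω) i j ∂P = 0 := by
  simp only [mul_apply]
  rw [integral_finsetSum _ fun k _ =>
    ((hZ.memLp_two k j).const_mul _).integrable one_le_two]
  simp only [integral_const_mul, hZ.mean_eq_zero, mul_zero, sum_const_zero]

lemma variance_mul_apply (hZ : IsWhiteNoise Z v P) (H : Matrix μ ι ℝ) (i : μ) (j : κ) :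
    Var[fun ω => (H * Z ω) i j; P] = v * ∑ k, H i k ^ 2 := by
  simp only [mul_apply]
  rw [variance_fun_sum fun k => (hZ.memLp_two k j).const_mul _]
  simp only [covariance_const_mul_left, covariance_const_mul_right, hZ.covariance_eq, mul_ite,
    mul_zero, sum_ite_eq, mem_univ, if_true, mul_sum]
  exact sum_congr rfl fun k _ => by ring

lemma integral_sub_mul_apply_sq (hZ : IsWhiteNoise Z v P) (M : Matrix μ κ ℝ) (H : Matrix μ ι ℝ)
    (i : μ) (j : κ) :
    ∫ ω, (M - H * Z ω) i j ^ 2 ∂P = M i j ^ 2 + v * ∑ k, H i k ^ 2 := by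
  have hmem := hZ.memLp_mul_apply H i j
  have hvar := variance_eq_sub (MemLp.sub (memLp_const (M i j)) hmem)
  simp only [Pi.sub_def, Pi.pow_apply] at hvar
  rw [variance_const_sub hmem.aestronglyMeasurable, hZ.variance_mul_apply, integral_sub
    (integrable_const _) (hmem.integrable one_le_two), hZ.integral_mul_apply, sub_zero,
    integral_const, probReal_univ, one_smul] at hvar
  simp only [Matrix.sub_apply]
  linarith

variable [Fintype κ] [Fintype μ]

lemma integral_norm_sub_mul_sq (hZ : IsWhiteNoise Z v P) (M : Matrix μ κ ℝ)
    (H : Matrix μ ι ℝ) :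
    ∫ ω, ‖M - H * Z ω‖ ^ 2 ∂P = ‖M‖ ^ 2 + Fintype.card κ * v * ‖H‖ ^ 2 := by
  have hint i j : Integrable (fun ω => (M - H * Z ω) i j ^ 2) P :=
    (MemLp.sub (memLp_const (M i j)) (hZ.memLp_mul_apply H i j)).integrable_sq
  simp only [frobenius_norm_sq]
  rw [integral_finsetSum _ fun i _ => integrable_finsetSum _ fun j _ => hint i j]
  simp only [integral_finsetSum _ fun j _ => hint _ j, hZ.integral_sub_mul_apply_sq,
    sum_add_distrib, sum_const, card_univ, nsmul_eq_mul, ← mul_sum]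
  ring

end IsWhiteNoise

end WhiteNoise

section Blocks

open scoped Matrix.Norms.Frobenius

variable {ι κ μ : Type*} [DecidableEq κ] {g : ι → κ} {m : ℕ}

/-- The matrix that averages over the blocks `g ⁻¹' {k}`, each assumed to have `m` elements. -/
noncomputable def blockAverage (g : ι → κ) (m : ℕ) : Matrix ι ι ℝ :=
  of fun i j => if g i = g j then (m : ℝ)⁻¹ else 0

lemma exists_mul_transpose_eq_blockAverage [Fintype μ] (f : κ ↪ μ) (g : ι → κ) (m : ℕ) :
    ∃ F : Matrix ι μ ℝ, F * Fᵀ = blockAverage g m := by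
  classical
  refine ⟨of fun i k => if f (g i) = k then (√m)⁻¹ else 0, ?_⟩
  ext i j
  simp [blockAverage, mul_apply, ← mul_inv, eq_comm]

lemma card_eq_card_mul_of_fiber_card [Fintype ι] [Fintype κ] (hg : ∀ k, #{i | g i = k} = m) :
    Fintype.card ι = Fintype.card κ * m := by
  rw [← card_univ, card_eq_sum_card_fiberwise fun i _ => mem_univ (g i)]
  simp [hg]

variable [Fintype ι]

lemma fiber_card_pos (hg : ∀ k, #{i | g i = k} = m) (i : ι) : 0 < m := by
  rw [← hg (g i), card_pos]
  exact ⟨i, by simp⟩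

lemma sum_ite_eq_fiber_card_mul (hg : ∀ k, #{i | g i = k} = m) (i : ι) (c : ℝ) :
    ∑ j, (if g i = g j then c else 0) = m * c := by
  simp only [eq_comm (a := g i), ← sum_filter, sum_const, hg, nsmul_eq_mul]

lemma blockAverage_mul_eq_self (hg : ∀ k, #{i | g i = k} = m) {Y : Matrix ι μ ℝ}
    (hY : ∀ i j, g i = g j → Y i = Y j) : blockAverage g m * Y = Y := by
  ext i k
  have hm : (m : ℝ) ≠ 0 := by exact_mod_cast (fiber_card_pos hg i).ne'
  calc (blockAverage g m * Y) i k
      = ∑ j, (if g i = g j then (m : ℝ)⁻¹ * Y i k else 0) := by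
        simp only [mul_apply, blockAverage, of_apply, ite_mul, zero_mul]
        refine sum_congr rfl fun j _ => ?_
        split_ifs with hij
        exacts [by rw [hY i j hij], rfl]
    _ = Y i k := by rw [sum_ite_eq_fiber_card_mul hg, mul_inv_cancel_left₀ hm]

lemma blockAverage_mul_self (hg : ∀ k, #{i | g i = k} = m) :
    blockAverage g m * blockAverage g m = blockAverage g m :=
  blockAverage_mul_eq_self hg fun i j hij => by ext; simp [blockAverage, hij]

variable [Fintype κ]

lemma norm_blockAverage_sq_le (hg : ∀ k, #{i | g i = k} = m) :
    ‖blockAverage g m‖ ^ 2 ≤ Fintype.card κ := by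
  have hsymm : (blockAverage g m)ᵀ = blockAverage g m := by
    ext i j
    simp [blockAverage, eq_comm]
  calc ‖blockAverage g m‖ ^ 2 = Fintype.card ι * (m : ℝ)⁻¹ := by
        rw [frobenius_norm_sq_eq_trace, hsymm, blockAverage_mul_self hg]
        simp [trace, blockAverage]
    _ = Fintype.card κ * (m * (m : ℝ)⁻¹) := by
        rw [card_eq_card_mul_of_fiber_card hg, Nat.cast_mul, mul_assoc]
    _ ≤ Fintype.card κ := mul_le_of_le_one_right (by positivity) mul_inv_le_one

end Blocks

section CompactDistinguishable

open scoped Matrix.Norms.Frobenius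

/-- Affinities within a block (a fiber of `g`) lie in `[1 / (1 + δ), 1 + δ]` (compactness), and
those across blocks are nonnegative and at most `ξ` times any affinity within a block
(distinguishability). -/
structure IsCompactDistinguishable {ι κ : Type*} (W : Matrix ι ι ℝ) (g : ι → κ) (δ ξ : ℝ) :
    Prop where
  within : ∀ i j, g i = g j → 1 / (1 + δ) ≤ W i j ∧ W i j ≤ 1 + δ
  across : ∀ i j, g i ≠ g j → 0 ≤ W i j ∧ ∀ s t, g s = g t → W i j ≤ ξ * W s t

lemma le_sqrt_mul_sqrt {a x y : ℝ} (ha : 0 ≤ a) (hx : a ≤ x) (hy : a ≤ y) : a ≤ √x * √y := by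
  grw [← hx, ← hy, Real.mul_self_sqrt ha]

lemma sqrt_mul_sqrt_le {b x y : ℝ} (hb : 0 ≤ b) (hx : x ≤ b) (hy : y ≤ b) : √x * √y ≤ b := by
  grw [hx, hy, Real.mul_self_sqrt hb]

namespace IsCompactDistinguishable

section Entries

variable {ι κ : Type*} {W : Matrix ι ι ℝ} {g : ι → κ} {δ ξ : ℝ} {i j : ι}

lemma apply_le_of_ne (h : IsCompactDistinguishable W g δ ξ) (hξ : 0 ≤ ξ) (hij : g i ≠ g j) :
    W i j ≤ ξ * (1 + δ) := by
  grw [(h.across i j hij).2 i i rfl, (h.within i i rfl).2]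

variable [Fintype ι] [DecidableEq κ] {m : ℕ}

lemma le_sum (h : IsCompactDistinguishable W g δ ξ) (hg : ∀ k, #{i | g i = k} = m) (i : ι) :
    m / (1 + δ) ≤ ∑ j, W i j := by
  rw [← mul_one_div, ← sum_ite_eq_fiber_card_mul hg i]
  gcongr with j
  split_ifs with hij
  exacts [(h.within i j hij).1, (h.across i j hij).1]

lemma sum_le [Fintype κ] (h : IsCompactDistinguishable W g δ ξ) (hδ : 0 ≤ δ) (hξ : 0 ≤ ξ)
    (hg : ∀ k, #{i | g i = k} = m) (i : ι) :
    ∑ j, W i j ≤ m * ((1 + δ) * (1 + Fintype.card κ * ξ)) := calc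
  ∑ j, W i j ≤ ∑ j, ((if g i = g j then 1 + δ else 0) + ξ * (1 + δ)) := by
    gcongr with j
    split_ifs with hij
    · exact (h.within i j hij).2.trans (le_add_of_nonneg_right (by positivity))
    · rw [zero_add]
      exact h.apply_le_of_ne hξ hij
  _ = m * ((1 + δ) * (1 + Fintype.card κ * ξ)) := by
    rw [sum_add_distrib, sum_ite_eq_fiber_card_mul hg, sum_const, card_univ, nsmul_eq_mul,
      card_eq_card_mul_of_fiber_card hg]
    push_cast
    ring

end Entries

variable {n m : ℕ} {κ : Type*} [DecidableEq κ] {W : Matrix (Fin n) (Fin n) ℝ}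
  {g : Fin n → κ} {δ ξ : ℝ} {i j : Fin n}

lemma abs_normalizedMatrix_le_of_ne (h : IsCompactDistinguishable W g δ ξ) (hδ : 0 ≤ δ)
    (hξ : 0 ≤ ξ) (hg : ∀ k, #{i | g i = k} = m) (hij : g i ≠ g j) :
    |normalizedMatrix W i j| ≤ (1 + δ) ^ 2 * ξ / m := by
  have hm : (0 : ℝ) < m := by exact_mod_cast fiber_card_pos hg i
  have hS : m / (1 + δ) ≤ √(∑ k, W i k) * √(∑ k, W j k) :=
    le_sqrt_mul_sqrt (by positivity) (h.le_sum hg i) (h.le_sum hg j)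
  rw [normalizedMatrix, abs_of_nonneg (div_nonneg (h.across i j hij).1 (by positivity))]
  calc W i j / (√(∑ k, W i k) * √(∑ k, W j k)) ≤ ξ * (1 + δ) / (m / (1 + δ)) := by
        gcongr
        exact h.apply_le_of_ne hξ hij
    _ = (1 + δ) ^ 2 * ξ / m := by field_simp

variable [Fintype κ]

lemma abs_normalizedMatrix_sub_inv_le (h : IsCompactDistinguishable W g δ ξ) (hδ : 0 ≤ δ)
    (hξ : 0 ≤ ξ) (hg : ∀ k, #{i | g i = k} = m) (hij : g i = g j) :
    |normalizedMatrix W i j - (m : ℝ)⁻¹| ≤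
      ((1 + δ) ^ 2 * (1 + Fintype.card κ * ξ) - 1) / m := by
  have hm : (0 : ℝ) < m := by exact_mod_cast fiber_card_pos hg i
  set r := (1 + δ) ^ 2 * (1 + Fintype.card κ * ξ) with hr
  set S := √(∑ k, W i k) * √(∑ k, W j k)
  have hrδ : (1 + δ) ^ 2 ≤ r :=
    le_mul_of_one_le_right (by positivity) (le_add_of_nonneg_right (by positivity))
  have hr0 : 0 < r := by positivity
  have hS : m / (1 + δ) ≤ S := le_sqrt_mul_sqrt (by positivity) (h.le_sum hg i) (h.le_sum hg j)
  have hS' : S ≤ m * ((1 + δ) * (1 + Fintype.card κ * ξ)) :=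
    sqrt_mul_sqrt_le (by positivity) (h.sum_le hδ hξ hg i) (h.sum_le hδ hξ hg j)
  have hS0 : 0 < S := lt_of_lt_of_le (by positivity) hS
  obtain ⟨hW, hW'⟩ := h.within i j hij
  have hupper : W i j / S ≤ r / m := calc
    W i j / S ≤ (1 + δ) / (m / (1 + δ)) := by gcongr
    _ = (1 + δ) ^ 2 / m := by field_simp
    _ ≤ r / m := by gcongr
  have hlower : (2 - r) / m ≤ W i j / S := calc
    (2 - r) / m ≤ r⁻¹ / m := by
      gcongr
      rw [← one_div, le_div_iff₀ hr0]
      nlinarith [sq_nonneg (r - 1)]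
    _ = 1 / (1 + δ) / (m * ((1 + δ) * (1 + Fintype.card κ * ξ))) := by rw [hr]; field_simp
    _ ≤ W i j / S := div_le_div₀ ((by positivity : 0 ≤ 1 / (1 + δ)).trans hW) hW hS0 hS'
  rw [abs_le, normalizedMatrix]
  constructor
  · calc -((r - 1) / m) = (2 - r) / m - (m : ℝ)⁻¹ := by ring
      _ ≤ W i j / S - (m : ℝ)⁻¹ := by gcongr
  · calc W i j / S - (m : ℝ)⁻¹ ≤ r / m - (m : ℝ)⁻¹ := by gcongr
      _ = (r - 1) / m := by ring

lemma abs_normalizedMatrix_sub_blockAverage_le (h : IsCompactDistinguishable W g δ ξ)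
    (hδ : 0 ≤ δ) (hδ1 : δ ≤ 1) (hξ : 0 ≤ ξ) (hg : ∀ k, #{i | g i = k} = m) (i j : Fin n) :
    |(normalizedMatrix W - blockAverage g m) i j| ≤ 4 * Fintype.card κ * (δ + ξ) / m := by
  have hcard : (1 : ℝ) ≤ Fintype.card κ := by
    exact_mod_cast Fintype.card_pos_iff.2 ⟨g i⟩
  rw [Matrix.sub_apply, blockAverage, of_apply]
  split_ifs with hij
  · grw [h.abs_normalizedMatrix_sub_inv_le hδ hξ hg hij]
    gcongr
    calc (1 + δ) ^ 2 * (1 + Fintype.card κ * ξ) - 1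
        = 2 * δ + δ * δ + (1 + δ) ^ 2 * (Fintype.card κ * ξ) := by ring
      _ ≤ 2 * δ + 1 * δ + (1 + 1) ^ 2 * (Fintype.card κ * ξ) := by gcongr
      _ ≤ 4 * (Fintype.card κ * δ) + 4 * (Fintype.card κ * ξ) := by
        linarith [le_mul_of_one_le_left hδ hcard]
      _ = 4 * Fintype.card κ * (δ + ξ) := by ring
  · rw [sub_zero]
    grw [h.abs_normalizedMatrix_le_of_ne hδ hξ hg hij]
    gcongr
    · calc (1 + δ) ^ 2 ≤ (1 + 1) ^ 2 := by gcongr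
        _ ≤ 4 * (Fintype.card κ : ℝ) := by linarith
    · exact le_add_of_nonneg_left hδ

lemma norm_normalizedMatrix_sub_blockAverage_le (h : IsCompactDistinguishable W g δ ξ)
    (hδ : 0 ≤ δ) (hδ1 : δ ≤ 1) (hξ : 0 ≤ ξ) (hg : ∀ k, #{i | g i = k} = m) :
    ‖normalizedMatrix W - blockAverage g m‖ ≤ 4 * Fintype.card κ ^ 2 * (δ + ξ) := by
  have hn : (n : ℝ) = Fintype.card κ * m := by
    exact_mod_cast (Fintype.card_fin n).symm.trans (card_eq_card_mul_of_fiber_card hg)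
  calc ‖normalizedMatrix W - blockAverage g m‖
      ≤ n * (4 * Fintype.card κ * (δ + ξ) / m) := by
        simpa using frobenius_norm_le_card_mul (by positivity)
          (h.abs_normalizedMatrix_sub_blockAverage_le hδ hδ1 hξ hg)
    _ = 4 * Fintype.card κ ^ 2 * (δ + ξ) * (m / m) := by rw [hn]; ring
    _ ≤ 4 * Fintype.card κ ^ 2 * (δ + ξ) :=
        mul_le_of_le_one_right (by positivity) (div_self_le_one _)

lemma norm_mul_transpose_sub_blockAverage_le (h : IsCompactDistinguishable W g δ ξ)
    (hδ : 0 ≤ δ) (hδ1 : δ ≤ 1) (hξ : 0 ≤ ξ) (hg : ∀ k, #{i | g i = k} = m) {μ : Type*}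
    [Fintype μ] (f : κ ↪ μ) {F : Matrix (Fin n) μ ℝ} (hF : ∀ F' : Matrix (Fin n) μ ℝ,
      ‖normalizedMatrix W - F * Fᵀ‖ ≤ ‖normalizedMatrix W - F' * F'ᵀ‖) :
    ‖F * Fᵀ - blockAverage g m‖ ≤ 8 * Fintype.card κ ^ 2 * (δ + ξ) := by
  obtain ⟨F', hF'⟩ := exists_mul_transpose_eq_blockAverage f g m
  rw [← hF']
  grw [norm_mul_transpose_sub_le_two_mul hF F', hF',
    h.norm_normalizedMatrix_sub_blockAverage_le hδ hδ1 hξ hg]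
  linarith

end IsCompactDistinguishable

end CompactDistinguishable

section ExpectedTrainingError

open scoped Matrix.Norms.Frobenius

lemma IsWhiteNoise.integral_norm_sub_ridge_fit_sq_le {Ω ι κ μ : Type*} [MeasurableSpace Ω]
    {P : Measure Ω} [IsProbabilityMeasure P] [Fintype ι] [DecidableEq ι] [Fintype κ]
    [DecidableEq κ] [Fintype μ] {Z : Ω → Matrix ι μ ℝ} {v : ℝ} (hZ : IsWhiteNoise Z v P)
    (hv : 0 ≤ v) {F : Matrix ι κ ℝ} {Q : Matrix ι ι ℝ} {Y : Matrix ι μ ℝ} {β e : ℝ} (hβ : 0 < β)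
    (hQ : Q * Q = Q) (hQY : Q * Y = Y) (hFQ : ‖F * Fᵀ - Q‖ ≤ e) :
    ∫ ω, ‖Y - F * ((Fᵀ * F + β • 1)⁻¹ * Fᵀ * (Y + Z ω))‖ ^ 2 ∂P ≤
      ((β / (β + 1)) ^ 2 + (2 + e) * e) * ‖Y‖ ^ 2 +
        Fintype.card μ * v * ((1 / (β + 1)) ^ 2 * ‖Q‖ ^ 2 +
          (√(Fintype.card κ) + ‖Q‖) * ((1 + ‖Q‖) * e / β)) := by
  have hresidual ω : Y - F * ((Fᵀ * F + β • 1)⁻¹ * Fᵀ * (Y + Z ω)) =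
      (Y - ridgeSmoother F β * Y) - ridgeSmoother F β * Z ω := by
    rw [← Matrix.mul_assoc F, ← ridgeSmoother, Matrix.mul_add, sub_add_eq_sub_sub]
  simp only [hresidual]
  rw [hZ.integral_norm_sub_mul_sq]
  gcongr
  exacts [norm_sub_ridgeSmoother_mul_sq_le F hβ hFQ hQY, norm_ridgeSmoother_sq_le F hβ hQ hFQ]

lemma frobSq_oneHot {n K : ℕ} {Y : Matrix (Fin n) (Fin K) ℝ} {c : Fin n → Fin K}
    (hY : ∀ i j, Y i j = if j = c i then 1 else 0) : frobSq Y = n := by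
  simp [frobSq, hY]

lemma two_mul_sqrt_mul_one_add_sqrt_le {x : ℝ} (hx : 1 ≤ x) : (√x + √x) * (1 + √x) ≤ 4 * x := by
  nlinarith [Real.sq_sqrt (zero_le_one.trans hx), Real.sqrt_le_self_iff.2 (Or.inr hx)]

lemma IsWhiteNoise.integral_frobSq_sub_ridge_fit_le {Ω κ : Type*} [MeasurableSpace Ω]
    {P : Measure Ω} [IsProbabilityMeasure P] [Fintype κ] [DecidableEq κ] {n K p m : ℕ}
    {Z : Ω → Matrix (Fin n) (Fin K) ℝ} {σ : ℝ} (hZ : IsWhiteNoise Z (σ ^ 2 / K) P)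
    {g : Fin n → κ} (hg : ∀ k, #{i | g i = k} = m) {c : κ → Fin K}
    {Y : Matrix (Fin n) (Fin K) ℝ} (hY : ∀ i j, Y i j = if j = c (g i) then 1 else 0)
    (hp : 1 ≤ p) (hκp : Fintype.card κ ≤ p) {F : Matrix (Fin n) (Fin p) ℝ} {β e : ℝ} (hβ : 0 < β)
    (hFQ : ‖F * Fᵀ - blockAverage g m‖ ≤ e) :
    ∫ ω, 1 / (n : ℝ) * frobSq (Y - F * ((Fᵀ * F + β • 1)⁻¹ * Fᵀ * (Y + Z ω))) ∂P ≤
      (β / (β + 1)) ^ 2 + (2 + e) * e + σ ^ 2 * (Fintype.card κ / n) * (1 / (β + 1)) ^ 2 +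
        4 * p * e * σ ^ 2 / β / n := by
  have he : 0 ≤ e := (norm_nonneg _).trans hFQ
  have hQ2 : ‖blockAverage g m‖ ^ 2 ≤ Fintype.card κ := norm_blockAverage_sq_le hg
  have hQp : ‖blockAverage g m‖ ≤ √p :=
    Real.le_sqrt_of_sq_le (hQ2.trans (by exact_mod_cast hκp))
  have hQY : blockAverage g m * Y = Y :=
    blockAverage_mul_eq_self hg fun i j hij => funext fun k => by rw [hY, hY, hij]
  have hY2 : ‖Y‖ ^ 2 = n := by rw [← frobSq_eq_norm_sq, frobSq_oneHot hY]
  have hvar : K * (σ ^ 2 / K) ≤ σ ^ 2 := by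
    rw [mul_div_left_comm]
    exact mul_le_of_le_one_right (sq_nonneg σ) (div_self_le_one _)
  have herror := hZ.integral_norm_sub_ridge_fit_sq_le (by positivity) hβ
    (blockAverage_mul_self hg) hQY hFQ
  simp only [Fintype.card_fin, hY2] at herror
  simp only [integral_const_mul, frobSq_eq_norm_sq]
  calc _ ≤ 1 / n * (((β / (β + 1)) ^ 2 + (2 + e) * e) * n +
        σ ^ 2 * ((1 / (β + 1)) ^ 2 * Fintype.card κ + (√p + √p) * ((1 + √p) * e / β))) := by
        grw [herror, hvar, hQ2]
        gcongr
    _ = ((β / (β + 1)) ^ 2 + (2 + e) * e) * (n / n) +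
        σ ^ 2 * (Fintype.card κ / n) * (1 / (β + 1)) ^ 2 +
        (√p + √p) * (1 + √p) * e * σ ^ 2 / β / n := by ring
    _ ≤ ((β / (β + 1)) ^ 2 + (2 + e) * e) * 1 +
        σ ^ 2 * (Fintype.card κ / n) * (1 / (β + 1)) ^ 2 + 4 * p * e * σ ^ 2 / β / n := by
        grw [div_self_le_one, two_mul_sqrt_mul_one_add_sqrt_le (by exact_mod_cast hp)]
    _ = _ := by rw [mul_one]

theorem gaussian_noise_training_error_bound_general
    (p Kb : ℕ) (hKb : 1 ≤ Kb) (hpKb : Kb ≤ p) :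
    ∃ C : ℝ, 0 < C ∧
      ∀ (n K m : ℕ) (δ ξ β σ : ℝ), 0 ≤ δ → δ ≤ 1 → 0 ≤ ξ → ξ ≤ 1 → 0 < β →
      ∀ (g : Fin n → Fin Kb), (∀ k, #{i | g i = k} = m) →
      ∀ (W : Matrix (Fin n) (Fin n) ℝ), IsCompactDistinguishable W g δ ξ →
      ∀ (F : Matrix (Fin n) (Fin p) ℝ),
        (∀ F' : Matrix (Fin n) (Fin p) ℝ,
          frobSq (normalizedMatrix W - F * Fᵀ) ≤ frobSq (normalizedMatrix W - F' * F'ᵀ)) →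
      ∀ (cls : Fin Kb → Fin K) (Y : Matrix (Fin n) (Fin K) ℝ),
        (∀ i j, Y i j = if j = cls (g i) then 1 else 0) →
      ∀ (Ω : Type*) (_ : MeasurableSpace Ω) (P : Measure Ω), IsProbabilityMeasure P →
      ∀ (ΔY : Ω → Matrix (Fin n) (Fin K) ℝ), IsWhiteNoise ΔY (σ ^ 2 / K) P →
        ∫ ω, (1 / (n : ℝ)) * frobSq (Y - F *
            ((Fᵀ * F + β • (1 : Matrix (Fin p) (Fin p) ℝ))⁻¹ * Fᵀ * (Y + ΔY ω))) ∂P ≤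
          (β / (β + 1)) ^ 2 + C * (δ + ξ) + σ ^ 2 * ((Kb : ℝ) / n) * (1 / (β + 1)) ^ 2 +
            C * σ ^ 2 * (δ + ξ) / β / n := by
  refine ⟨8 * Kb ^ 2 * (2 + 16 * Kb ^ 2 + 4 * p), by positivity, ?_⟩
  intro n K m δ ξ β σ hδ hδ1 hξ hξ1 hβ g hg W hW F hF cls Y hY Ω _ P _ ΔY hΔY
  set e := 8 * (Kb : ℝ) ^ 2 * (δ + ξ) with he
  have hFQ : ‖F * Fᵀ - blockAverage g m‖ ≤ e := by
    simp only [frobSq_eq_norm_sq, sq_le_sq₀ (norm_nonneg _) (norm_nonneg _)] at hF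
    simpa using hW.norm_mul_transpose_sub_blockAverage_le hδ hδ1 hξ hg (Fin.castLEEmb hpKb) hF
  have he0 : 0 ≤ e := by positivity
  have he_le : e ≤ 16 * Kb ^ 2 := by
    rw [he]
    nlinarith [sq_nonneg (Kb : ℝ)]
  have herror := hΔY.integral_frobSq_sub_ridge_fit_le hg hY (hKb.trans hpKb) (by simpa) hβ hFQ
  rw [Fintype.card_fin] at herror
  have hbias : (2 + e) * e ≤ (2 + 16 * Kb ^ 2 + 4 * p) * e :=
    mul_le_mul_of_nonneg_right (by linarith [Nat.cast_nonneg (α := ℝ) p]) he0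
  have hnoise : 4 * p * e ≤ (2 + 16 * Kb ^ 2 + 4 * p) * e :=
    mul_le_mul_of_nonneg_right (by linarith [sq_nonneg (Kb : ℝ)]) he0
  grw [herror, hbias, hnoise]
  exact le_of_eq (by rw [he]; ring)

end ExpectedTrainingError

/-- paper's Theorem 4.2, Gaussian label noise.  For every
`p ≥ 1` and `K̄ ≥ 1` with `p ≥ K̄` there is `C > 0` such that: for balanced compact and
distinguishable sub-classes (symmetric `W` with in-block entries in `[1/(1+δ), 1+δ]`,
in-block same-column entry ratios at most `1+δ`, off-block entries nonnegative and at
most `ξ` times every in-block entry), for any minimizer `F ∈ ℝ^{n×p}` of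
`‖Ã − FFᵀ‖_F²` (where `Ã` is the normalized matrix of `W`), for one-hot clean labels `Y`
constant on sub-classes, and a random label perturbation `ΔY` with independent entries
distributed as `N(0, σ²/K)`, the ridge solution `Ŵ* = (FᵀF + βI)⁻¹Fᵀ(Y + ΔY)` has
expected training error w.r.t. the ground-truth labels at most
`(β/(β+1))² + C(δ+ξ) + σ²(K̄/n)(1/(β+1))² + Cσ²(√δ + ξ)/β`. -/
theorem gaussian_noise_training_error_bound
    (p Kb : ℕ) (hp : 1 ≤ p) (hKb : 1 ≤ Kb) (hpKb : Kb ≤ p) :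
    ∃ C : ℝ, 0 < C ∧
      ∀ (n K : ℕ), K ≤ Kb → Kb ∣ n →
      ∀ (δ ξ β : ℝ), 0 ≤ δ → δ < 1 → 0 ≤ ξ → ξ < 1 → 0 < β →
      ∀ (σ : NNReal),
      ∀ (g : Fin n → Fin Kb),
        (∀ k : Fin Kb, (Finset.univ.filter fun i => g i = k).card = n / Kb) →
      ∀ (W : Matrix (Fin n) (Fin n) ℝ), W.IsSymm →
        (∀ i j, g i = g j → 1 / (1 + δ) ≤ W i j ∧ W i j ≤ 1 + δ) →
        (∀ s t j, g s = g j → g t = g j → W s j / W t j ≤ 1 + δ) →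
        (∀ i j, g i ≠ g j → 0 ≤ W i j ∧ ∀ s t, g s = g t → W i j ≤ ξ * W s t) →
      ∀ (F : Matrix (Fin n) (Fin p) ℝ),
        (∀ F' : Matrix (Fin n) (Fin p) ℝ,
          frobSq (normalizedMatrix W - F * Fᵀ) ≤ frobSq (normalizedMatrix W - F' * F'ᵀ)) →
      ∀ (cls : Fin Kb → Fin K),
      ∀ (Y : Matrix (Fin n) (Fin K) ℝ),
        (∀ i j, Y i j = if j = cls (g i) then 1 else 0) →
      ∀ (Ω : Type) (mΩ : MeasurableSpace Ω) (P : Measure Ω), IsProbabilityMeasure P →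
      ∀ (ΔY : Ω → Matrix (Fin n) (Fin K) ℝ),
        (∀ (i : Fin n) (j : Fin K), Measurable (fun ω => ΔY ω i j)) →
        (∀ (i : Fin n) (j : Fin K),
          Measure.map (fun ω => ΔY ω i j) P = gaussianReal 0 (σ ^ 2 / (K : NNReal))) →
        iIndepFun (m := fun _ : Fin n × Fin K => (inferInstance : MeasurableSpace ℝ))
          (fun ik ω => ΔY ω ik.1 ik.2) P →
        ∫ ω, (1 / (n : ℝ)) * frobSq (Y - F *
            ((Fᵀ * F + β • (1 : Matrix (Fin p) (Fin p) ℝ))⁻¹ * Fᵀ * (Y + ΔY ω))) ∂P ≤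
          (β / (β + 1)) ^ 2 + C * (δ + ξ) +
            (σ : ℝ) ^ 2 * ((Kb : ℝ) / n) * (1 / (β + 1)) ^ 2 +
            C * (σ : ℝ) ^ 2 * (Real.sqrt δ + ξ) / β := by
  obtain ⟨C, hC, hbound⟩ := gaussian_noise_training_error_bound_general p Kb hKb hpKb
  refine ⟨C, hC, fun n K _ _ δ ξ β hδ hδ1 hξ hξ1 hβ σ g hg W _ hwithin _ hacross F hF cls Y hY
    Ω _ P _ ΔY hmeas hlaw hindep => ?_⟩
  have hΔY : IsWhiteNoise ΔY ((σ : ℝ) ^ 2 / K) P := by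
    simpa using isWhiteNoise_of_gaussianReal
      (fun i j => ⟨(hmeas i j).aemeasurable, hlaw i j⟩) hindep
  have hrate : C * (σ : ℝ) ^ 2 * (δ + ξ) / β / n ≤ C * (σ : ℝ) ^ 2 * (√δ + ξ) / β := by
    grw [div_nat_le_self_of_nonnneg (by positivity) n, Real.le_sqrt_self_iff.2 hδ1.le]
  grw [hbound n K _ δ ξ β σ hδ hδ1.le hξ hξ1.le hβ g hg W ⟨hwithin, hacross⟩ F hF cls Y hY
    Ω _ P inferInstance ΔY hΔY, hrate]
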